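/- Let N be a positive integer, h = (h₁,h₂) ∈ ℤ², and τ ∈ H. Then sup_{t > 0} |Θ̃_h(τ,t)| < ∞, i.e. the function t ↦ Θ̃_h(τ,t) is bounded on (0,∞). -/

import Mathlib

open MeasureTheory Filter Set

noncomputable section

/-- `e(z) = exp(2πiz)` -/
def eC (z : ℂ) : ℂ := Complex.exp (2 * Real.pi * Complex.I * z)

/-- The complementary error function `erfc(x) = (2/√π)∫_x^∞ e^{-r²} dr`. -/
def erfc (x : ℝ) : ℝ := (2 / Real.sqrt Real.pi) * ∫ r in Set.Ioi x, Real.exp (-(r ^ 2))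

/-- `φ*_τ(x,y) = e(((y²-x²)/2)τ)·sgn(x)·erfc(√(2πv)|x|)`. -/
def phiStar (τ : ℂ) (x y : ℝ) : ℂ :=
  eC ((((y : ℂ) ^ 2 - (x : ℂ) ^ 2) / 2) * τ) * (Real.sign x : ℂ) *
    (erfc (Real.sqrt (2 * Real.pi * τ.im) * |x|) : ℂ)

/-- `φ⁺_τ(x,y) = e(((y²-x²)/2)τ)·sgn(x)·1_{y²>x²}`. -/
def phiPlus (τ : ℂ) (x y : ℝ) : ℂ :=
  eC ((((y : ℂ) ^ 2 - (x : ℂ) ^ 2) / 2) * τ) * (Real.sign x : ℂ) *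
    (if x ^ 2 < y ^ 2 then 1 else 0)

/-- `φ̃_τ = φ⁺_τ - φ*_τ`. -/
def phiTilde (τ : ℂ) (x y : ℝ) : ℂ := phiPlus τ x y - phiStar τ x y

/-- The isometry `ι_t(x₁,x₂) = ((t⁻¹x₁+tx₂)/√(2N), (t⁻¹x₁-tx₂)/√(2N))`. -/
def iota (N : ℕ) (t x₁ x₂ : ℝ) : ℝ × ℝ :=
  ((t⁻¹ * x₁ + t * x₂) / Real.sqrt (2 * N), (t⁻¹ * x₁ - t * x₂) / Real.sqrt (2 * N))

/-- `⟨x⟩ ∈ (0,1]`, the representative of `x` modulo `ℤ` lying in `(0,1]`. -/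
def frac01 (x : ℝ) : ℝ := x - ⌈x⌉ + 1

/-- The constant coefficient `c_h(0)`. -/
def cH0 (N : ℕ) (h : ℤ × ℤ) : ℝ :=
  if ¬ ((N : ℤ) ∣ h.1) ∧ (N : ℤ) ∣ h.2 then 1 / 2 - frac01 ((h.1 : ℝ) / N)
  else if ((N : ℤ) ∣ h.1) ∧ ¬ ((N : ℤ) ∣ h.2) then 1 / 2 - frac01 ((h.2 : ℝ) / N)
  else 0

/-- `Θ̃_h(τ,t) = c_h(0) + Σ_{x ≡ h (N)} φ̃_τ(ι_t(x₁,x₂))`; the index `p ∈ ℤ²`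
corresponds to `x_j = h_j + N·p_j`. -/
def ThetaTilde (N : ℕ) (h : ℤ × ℤ) (τ : ℂ) (t : ℝ) : ℂ :=
  (cH0 N h : ℂ) + ∑' p : ℤ × ℤ,
    phiTilde τ (iota N t ((h.1 + N * p.1 : ℤ) : ℝ) ((h.2 + N * p.2 : ℤ) : ℝ)).1
               (iota N t ((h.1 + N * p.1 : ℤ) : ℝ) ((h.2 + N * p.2 : ℤ) : ℝ)).2

/-! The modulus of the exponential in `φ̃_τ(ι_t(x₁, x₂))` depends only on `y² - x² = -2x₁x₂/N`,
which does not involve `t`. Hence the terms with `x₁x₂ ≠ 0` are dominated, uniformly in `t`, by a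
summable family `2 exp(-κ(|x₁| + |x₂|))`. On each axis `φ⁺_τ` vanishes and `φ̃_τ` is, up to sign and
scaling, the odd extension of `erfc` from the positive half-line. Its sum along an arithmetic
progression has no absolute bound uniform in the scale, but pairing the two ends of the progression
makes the sum telescope, so it is at most `erfc 0 ≤ 1` whatever the scale. -/

section OddSeries

lemma tsum_eq_zero_of_odd {α : Type*} [InvolutiveNeg α] {f : α → ℝ} (hf : f.Odd) :
    ∑' n, f n = 0 := by
  have hneg : ∑' n, f n = -∑' n, f n := by
    rw [← tsum_neg, ← (Equiv.neg α).tsum_eq f]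
    exact tsum_congr hf
  linarith

variable {F : ℝ → ℝ} {M : ℝ}

lemma abs_tsum_add_int_le_of_mem_Ioo (hodd : F.Odd) (hanti : AntitoneOn F (Ioi 0))
    (hF : ∀ y, 0 < y → F y ∈ Icc 0 M) {x : ℝ} (hx : x ∈ Ioo 0 1)
    (hs : Summable fun n : ℤ => F (x + n)) : |∑' n : ℤ, F (x + n)| ≤ M := by
  obtain ⟨hx₀, hx₁⟩ := hx
  have hright : Summable fun n : ℕ => F (x + (n : ℤ)) :=
    hs.comp_injective Nat.cast_injective
  have hleft : Summable fun n : ℕ => F (x + (-((n : ℤ) + 1) : ℤ)) :=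
    hs.comp_injective (i := fun n : ℕ => -((n : ℤ) + 1)) fun a b => by simp
  rw [tsum_of_nat_of_neg_add_one (f := fun n : ℤ => F (x + n)) hright hleft,
    ← hright.tsum_add hleft]
  set y := min x (1 - x)
  have hy : 0 < y := lt_min hx₀ (by linarith)
  have hyx : y ≤ x := min_le_left _ _
  have hyx' : y ≤ 1 - x := min_le_right _ _
  -- Both `x + n` and `n + 1 - x` lie in `[y + n, y + n + 1]`.
  have hpair (n : ℕ) : |F (x + (n : ℤ)) + F (x + (-((n : ℤ) + 1) : ℤ))| ≤
      F (y + n) - F (y + (n + 1 : ℕ)) := by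
    have hmem {z : ℝ} (h₁ : y + n ≤ z) (h₂ : z ≤ y + (n + 1 : ℕ)) :
        F z ∈ Icc (F (y + (n + 1 : ℕ))) (F (y + n)) :=
      have hpos : 0 < y + n := by positivity
      ⟨hanti (hpos.trans_le h₁) (hpos.trans_le (h₁.trans h₂)) h₂,
        hanti hpos (hpos.trans_le h₁) h₁⟩
    have hreflect : F (x + (-((n : ℤ) + 1) : ℤ)) = -F (n + 1 - x) := by
      rw [← hodd]
      push_cast
      ring_nf
    rw [hreflect, ← sub_eq_add_neg, ← Real.dist_eq]
    refine Real.dist_le_of_mem_Icc (hmem ?_ ?_) (hmem ?_ ?_) <;> push_cast <;> linarith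
  refine le_of_tendsto' (hright.add hleft).hasSum.tendsto_sum_nat.abs fun k => ?_
  calc |∑ n ∈ Finset.range k, (F (x + (n : ℤ)) + F (x + (-((n : ℤ) + 1) : ℤ)))|
      ≤ ∑ n ∈ Finset.range k, (F (y + n) - F (y + (n + 1 : ℕ))) :=
        (Finset.abs_sum_le_sum_abs _ _).trans (Finset.sum_le_sum fun n _ => hpair n)
    _ = F (y + (0 : ℕ)) - F (y + k) := Finset.sum_range_sub' (fun n : ℕ => F (y + n)) k
    _ ≤ M := by linarith [(hF (y + (0 : ℕ)) (by positivity)).2, (hF (y + k) (by positivity)).1]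

lemma abs_tsum_add_int_le (hodd : F.Odd) (hanti : AntitoneOn F (Ioi 0))
    (hF : ∀ y, 0 < y → F y ∈ Icc 0 M) {x : ℝ} (hs : Summable fun n : ℤ => F (x + n)) :
    |∑' n : ℤ, F (x + n)| ≤ M := by
  have hshift (n : ℤ) : F (x + n) = F (Int.fract x + (Equiv.addRight ⌊x⌋ n : ℤ)) := by
    congr 1
    rw [Equiv.coe_addRight, Int.cast_add, ← Int.self_sub_floor]
    ring
  simp only [hshift] at hs ⊢
  rw [(Equiv.addRight ⌊x⌋).tsum_eq fun n : ℤ => F (Int.fract x + n)]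
  rcases (Int.fract_nonneg x).eq_or_lt with h₀ | h₀
  · have hodd' : (fun n : ℤ => F (Int.fract x + n)).Odd := fun n => by
      simp only [← h₀, zero_add, Int.cast_neg, hodd (n : ℝ)]
    rw [tsum_eq_zero_of_odd hodd', abs_zero]
    exact (hF 1 one_pos).1.trans (hF 1 one_pos).2
  · exact abs_tsum_add_int_le_of_mem_Ioo hodd hanti hF ⟨h₀, Int.fract_lt_one x⟩
      ((Equiv.addRight ⌊x⌋).summable_iff.mp hs)

end OddSeries

section Erfc

lemma integrable_exp_neg_sq : Integrable fun r : ℝ => Real.exp (-(r ^ 2)) := by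
  simpa using integrable_exp_neg_mul_sq one_pos

lemma erfc_nonneg (x : ℝ) : 0 ≤ erfc x :=
  mul_nonneg (by positivity) (integral_nonneg fun _ => (Real.exp_pos _).le)

lemma erfc_antitone : Antitone erfc := fun _ _ hxy =>
  mul_le_mul_of_nonneg_left
    (setIntegral_mono_set integrable_exp_neg_sq.integrableOn
      (Eventually.of_forall fun _ => (Real.exp_pos _).le) (Ioi_subset_Ioi hxy).eventuallyLE)
    (by positivity)

lemma integral_Ioi_exp_neg_sq_le {x : ℝ} (hx : 0 ≤ x) :
    ∫ r in Ioi x, Real.exp (-(r ^ 2)) ≤ Real.exp (-(x ^ 2)) * (√Real.pi / 2) := by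
  have htranslate : ∫ r in Ioi x, Real.exp (-(r ^ 2)) =
      ∫ s in Ioi (0 : ℝ), Real.exp (-((s + x) ^ 2)) := by
    rw [← (measurePreserving_add_right volume x).setIntegral_preimage_emb
      (measurableEmbedding_addRight x)]
    simp
  calc ∫ r in Ioi x, Real.exp (-(r ^ 2))
      = ∫ s in Ioi (0 : ℝ), Real.exp (-((s + x) ^ 2)) := htranslate
    _ ≤ ∫ s in Ioi (0 : ℝ), Real.exp (-(x ^ 2)) * Real.exp (-(s ^ 2)) := by
        refine setIntegral_mono_on (integrable_exp_neg_sq.comp_add_right x).integrableOn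
          (integrable_exp_neg_sq.const_mul _).integrableOn measurableSet_Ioi fun s hs => ?_
        rw [← Real.exp_add, Real.exp_le_exp]
        nlinarith [mul_nonneg (mem_Ioi.mp hs).le hx]
    _ = Real.exp (-(x ^ 2)) * (√Real.pi / 2) := by
        rw [integral_const_mul]
        congr 1
        simpa using integral_gaussian_Ioi 1

lemma erfc_le_exp_neg_sq {x : ℝ} (hx : 0 ≤ x) : erfc x ≤ Real.exp (-(x ^ 2)) :=
  calc erfc x ≤ 2 / √Real.pi * (Real.exp (-(x ^ 2)) * (√Real.pi / 2)) :=
        mul_le_mul_of_nonneg_left (integral_Ioi_exp_neg_sq_le hx) (by positivity)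
    _ = Real.exp (-(x ^ 2)) := by
        have := Real.sqrt_pos.mpr Real.pi_pos
        field_simp

lemma abs_sign_le_one (x : ℝ) : |Real.sign x| ≤ 1 := by
  rcases Real.sign_apply_eq x with h | h | h <;> simp [h]

/-- The odd extension of `erfc` from the positive half-line, with value `0` at `0`: the profile of
`φ*_τ` on the light cone `y² = x²`. -/
def oddErfc (x : ℝ) : ℝ := Real.sign x * erfc |x|

lemma oddErfc_of_pos {x : ℝ} (hx : 0 < x) : oddErfc x = erfc x := by
  rw [oddErfc, Real.sign_of_pos hx, abs_of_pos hx, one_mul]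

lemma oddErfc_odd : oddErfc.Odd := fun x => by
  rw [oddErfc, oddErfc, Real.sign_neg, abs_neg, neg_mul]

lemma abs_oddErfc_le (x : ℝ) : |oddErfc x| ≤ Real.exp (-(x ^ 2)) := by
  rw [oddErfc, abs_mul, abs_of_nonneg (erfc_nonneg _), ← sq_abs x]
  exact (mul_le_of_le_one_left (erfc_nonneg _) (abs_sign_le_one x)).trans
    (erfc_le_exp_neg_sq (abs_nonneg x))

variable {a : ℝ}

lemma oddErfc_mul (ha : 0 < a) (x : ℝ) : oddErfc (a * x) = Real.sign x * erfc (a * |x|) := by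
  have hsign : Real.sign (a * x) = Real.sign x := by
    rcases lt_trichotomy x 0 with h | rfl | h
    · rw [Real.sign_of_neg h, Real.sign_of_neg (mul_neg_of_pos_of_neg ha h)]
    · rw [mul_zero]
    · rw [Real.sign_of_pos h, Real.sign_of_pos (mul_pos ha h)]
  rw [oddErfc, hsign, abs_mul, abs_of_pos ha]

lemma summable_oddErfc (ha : 0 < a) (x : ℝ) : Summable fun n : ℤ => oddErfc (a * (x + n)) := by
  have hgauss := (HurwitzZeta.hasSum_int_evenKernel x
    (div_pos (sq_pos_of_pos ha) Real.pi_pos)).summable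
  refine hgauss.of_norm_bounded fun n => (abs_oddErfc_le _).trans_eq ?_
  congr 1
  field_simp
  ring

lemma abs_tsum_oddErfc_le (ha : 0 < a) (x : ℝ) : |∑' n : ℤ, oddErfc (a * (x + n))| ≤ 1 := by
  have hodd : Function.Odd fun y => oddErfc (a * y) := fun y => by
    simp only [mul_neg, oddErfc_odd (a * y)]
  refine abs_tsum_add_int_le hodd (fun y hy z hz hyz => ?_) (fun y hy => ?_)
    (summable_oddErfc ha x)
  · simp only [oddErfc_of_pos (mul_pos ha hy), oddErfc_of_pos (mul_pos ha hz)]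
    exact erfc_antitone (mul_le_mul_of_nonneg_left hyz ha.le)
  · have hay := mul_pos ha hy
    rw [oddErfc_of_pos hay]
    exact ⟨erfc_nonneg _, (erfc_le_exp_neg_sq hay.le).trans (by simpa using sq_nonneg (a * y))⟩

end Erfc

section DoubleSeries

lemma summable_int_exp_neg_mul_abs {a : ℝ} (ha : 0 < a) :
    Summable fun n : ℤ => Real.exp (-(a * |(n : ℝ)|)) := by
  have hnat : Summable fun n : ℕ => Real.exp (n * -a) :=
    Real.summable_exp_nat_mul_iff.mpr (neg_lt_zero.mpr ha)
  refine .of_nat_of_neg ?_ ?_ <;> simpa [mul_comm a] using hnat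

lemma summable_int_prod_exp_neg_mul_abs_add_abs {a : ℝ} (ha : 0 < a) :
    Summable fun p : ℤ × ℤ => Real.exp (-(a * (|(p.1 : ℝ)| + |(p.2 : ℝ)|))) := by
  simp only [mul_add, neg_add, Real.exp_add]
  have h := summable_int_exp_neg_mul_abs ha
  exact h.mul_of_nonneg h (fun _ => (Real.exp_pos _).le) fun _ => (Real.exp_pos _).le

variable {ι κ E : Type*} [NormedAddCommGroup E] {f : ι × κ → E} {s : Set ι} {t : Set κ} {A B : ℝ}

lemma exists_hasSum_indicator_fst (hs : s.Subsingleton) (hA : 0 ≤ A)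
    (hf : ∀ i ∈ s, Summable (fun j => f (i, j)) ∧ ‖∑' j, f (i, j)‖ ≤ A) :
    ∃ c, ‖c‖ ≤ A ∧ HasSum ((Prod.fst ⁻¹' s).indicator f) c := by
  rcases hs.eq_empty_or_singleton with rfl | ⟨i, rfl⟩
  · exact ⟨0, by rwa [norm_zero], by simp [hasSum_zero]⟩
  · obtain ⟨hsum, hle⟩ := hf i rfl
    refine ⟨_, hle, ?_⟩
    rw [← (Prod.mk_right_injective i).hasSum_iff]
    · simpa [Function.comp_def] using hsum.hasSum
    · rintro ⟨i', j⟩ hj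
      refine indicator_of_notMem (fun hi => hj ⟨j, ?_⟩) f
      rw [← mem_singleton_iff.mp hi]

lemma exists_hasSum_indicator_snd (ht : t.Subsingleton) (hB : 0 ≤ B)
    (hf : ∀ j ∈ t, Summable (fun i => f (i, j)) ∧ ‖∑' i, f (i, j)‖ ≤ B) :
    ∃ c, ‖c‖ ≤ B ∧ HasSum ((Prod.snd ⁻¹' t).indicator f) c := by
  obtain ⟨c, hc, hsum⟩ := exists_hasSum_indicator_fst (f := f ∘ Prod.swap) ht hB hf
  refine ⟨c, hc, ?_⟩
  have hswap : (Prod.snd ⁻¹' t).indicator f ∘ Prod.swap =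
      (Prod.fst ⁻¹' t).indicator (f ∘ Prod.swap) :=
    funext fun _ => (indicator_comp_right (s := Prod.snd ⁻¹' t) Prod.swap).symm
  rwa [← (Equiv.prodComm κ ι).hasSum_iff, Equiv.coe_prodComm, hswap]

lemma norm_tsum_prod_le_tsum_add_add [CompleteSpace E] {D : ι × κ → ℝ} (hs : s.Subsingleton)
    (ht : t.Subsingleton) (hA : 0 ≤ A) (hB : 0 ≤ B) (hD : Summable D) (hD₀ : 0 ≤ D)
    (hoff : ∀ i ∉ s, ∀ j ∉ t, ‖f (i, j)‖ ≤ D (i, j)) (hcross : ∀ i ∈ s, ∀ j ∈ t, f (i, j) = 0)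
    (hrow : ∀ i ∈ s, Summable (fun j => f (i, j)) ∧ ‖∑' j, f (i, j)‖ ≤ A)
    (hcol : ∀ j ∈ t, Summable (fun i => f (i, j)) ∧ ‖∑' i, f (i, j)‖ ≤ B) :
    ‖∑' p, f p‖ ≤ ∑' p, D p + A + B := by
  obtain ⟨r, hr, hrsum⟩ := exists_hasSum_indicator_fst hs hA hrow
  obtain ⟨c, hc, hcsum⟩ := exists_hasSum_indicator_snd ht hB hcol
  have hbound (p : ι × κ) : ‖(sᶜ ×ˢ tᶜ).indicator f p‖ ≤ D p := by
    by_cases hp : p ∈ sᶜ ×ˢ tᶜ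
    · rw [indicator_of_mem hp]
      exact hoff p.1 hp.1 p.2 hp.2
    · rw [indicator_of_notMem hp, norm_zero]
      exact hD₀ p
  have hsplit : f = fun p => (sᶜ ×ˢ tᶜ).indicator f p + (Prod.fst ⁻¹' s).indicator f p +
      (Prod.snd ⁻¹' t).indicator f p := by
    ext ⟨i, j⟩
    by_cases hi : i ∈ s <;> by_cases hj : j ∈ t <;> simp [hi, hj, hcross]
  have hoffsum := (hD.of_norm_bounded hbound).hasSum
  rw [hsplit, ((hoffsum.add hrsum).add hcsum).tsum_eq]
  exact norm_add₃_le.trans (by gcongr; exact tsum_of_norm_bounded hD.hasSum hbound)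

end DoubleSeries

section Kernel

variable {τ : ℂ}

lemma norm_eC_ofReal_mul (r : ℝ) (τ : ℂ) :
    ‖eC (r * τ)‖ = Real.exp (-(2 * Real.pi * (r * τ.im))) := by
  rw [eC, Complex.norm_exp]
  simp

lemma norm_eC_mul_sign_le (τ : ℂ) (x y : ℝ) :
    ‖eC (((y : ℂ) ^ 2 - (x : ℂ) ^ 2) / 2 * τ) * (Real.sign x : ℂ)‖ ≤
      Real.exp (-(Real.pi * τ.im * (y ^ 2 - x ^ 2))) := by
  have hcast : ((y : ℂ) ^ 2 - (x : ℂ) ^ 2) / 2 = ((y ^ 2 - x ^ 2) / 2 : ℝ) := by push_cast; rfl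
  rw [norm_mul, hcast, norm_eC_ofReal_mul, Complex.norm_real]
  refine (mul_le_of_le_one_right (Real.exp_pos _).le (abs_sign_le_one x)).trans_eq ?_
  congr 1
  ring

lemma norm_phiPlus_le (τ : ℂ) (x y : ℝ) :
    ‖phiPlus τ x y‖ ≤ Real.exp (-(Real.pi * τ.im * |y ^ 2 - x ^ 2|)) := by
  rw [phiPlus]
  split_ifs with hxy
  · rw [mul_one, abs_of_pos (sub_pos.mpr hxy)]
    exact norm_eC_mul_sign_le τ x y
  · rw [mul_zero, norm_zero]
    positivity

lemma norm_phiStar_le (hτ : 0 ≤ τ.im) (x y : ℝ) :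
    ‖phiStar τ x y‖ ≤ Real.exp (-(Real.pi * τ.im * |y ^ 2 - x ^ 2|)) := by
  have hv : 0 ≤ Real.pi * τ.im := by positivity
  have herfc := erfc_le_exp_neg_sq (x := √(2 * Real.pi * τ.im) * |x|) (by positivity)
  rw [mul_pow, Real.sq_sqrt (by positivity), sq_abs] at herfc
  have habs : |y ^ 2 - x ^ 2| ≤ (y ^ 2 - x ^ 2) + 2 * x ^ 2 := by
    rw [abs_le]
    constructor <;> linarith [sq_nonneg x, sq_nonneg y]
  calc ‖phiStar τ x y‖
      ≤ Real.exp (-(Real.pi * τ.im * (y ^ 2 - x ^ 2))) *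
          Real.exp (-(2 * Real.pi * τ.im * x ^ 2)) := by
        rw [phiStar, norm_mul, Complex.norm_real, Real.norm_of_nonneg (erfc_nonneg _)]
        gcongr
        exacts [erfc_nonneg _, norm_eC_mul_sign_le τ x y]
    _ ≤ Real.exp (-(Real.pi * τ.im * |y ^ 2 - x ^ 2|)) := by
        rw [← Real.exp_add, Real.exp_le_exp]
        linarith [mul_le_mul_of_nonneg_left habs hv]

lemma norm_phiTilde_le (hτ : 0 ≤ τ.im) (x y : ℝ) :
    ‖phiTilde τ x y‖ ≤ 2 * Real.exp (-(Real.pi * τ.im * |y ^ 2 - x ^ 2|)) := by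
  rw [phiTilde, two_mul]
  exact (norm_sub_le _ _).trans (add_le_add (norm_phiPlus_le τ x y) (norm_phiStar_le hτ x y))

lemma phiTilde_of_sq_eq_sq (hτ : 0 < τ.im) {x y : ℝ} (hxy : y ^ 2 = x ^ 2) :
    phiTilde τ x y = -(oddErfc (√(2 * Real.pi * τ.im) * x) : ℂ) := by
  have hxy' : (y : ℂ) ^ 2 = (x : ℂ) ^ 2 := mod_cast hxy
  rw [oddErfc_mul (Real.sqrt_pos.mpr (by positivity))]
  simp [phiTilde, phiPlus, phiStar, hxy, hxy', eC]

end Kernel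

section Theta

/-- The summand `φ̃_τ(ι_t(x₁, x₂))` of the theta series, as a function of real `x₁`, `x₂`. -/
def thetaTerm (N : ℕ) (τ : ℂ) (t x₁ x₂ : ℝ) : ℂ :=
  phiTilde τ (iota N t x₁ x₂).1 (iota N t x₁ x₂).2

variable {N : ℕ} {τ : ℂ} {t : ℝ}

lemma iota_snd_sq_sub_fst_sq (N : ℕ) (ht : t ≠ 0) (x₁ x₂ : ℝ) :
    (iota N t x₁ x₂).2 ^ 2 - (iota N t x₁ x₂).1 ^ 2 = -(2 * (x₁ * x₂) / N) := by
  simp only [iota, div_pow, Real.sq_sqrt (by positivity : (0 : ℝ) ≤ 2 * N)]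
  field_simp
  ring

lemma norm_thetaTerm_le (hτ : 0 ≤ τ.im) (ht : t ≠ 0) (x₁ x₂ : ℝ) :
    ‖thetaTerm N τ t x₁ x₂‖ ≤ 2 * Real.exp (-(Real.pi * τ.im / N * (2 * |x₁ * x₂|))) := by
  refine (norm_phiTilde_le hτ _ _).trans_eq ?_
  rw [iota_snd_sq_sub_fst_sq N ht, abs_neg, abs_div, abs_mul, abs_two, Nat.abs_cast,
    mul_div_assoc', div_mul_eq_mul_div]

lemma abs_add_abs_le_two_mul_abs_mul {m n : ℤ} (hm : m ≠ 0) (hn : n ≠ 0) :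
    |(m : ℝ)| + |(n : ℝ)| ≤ 2 * |(m : ℝ) * n| := by
  have hm' : (1 : ℝ) ≤ |(m : ℝ)| := mod_cast Int.one_le_abs hm
  have hn' : (1 : ℝ) ≤ |(n : ℝ)| := mod_cast Int.one_le_abs hn
  rw [abs_mul]
  nlinarith

lemma norm_thetaTerm_int_le (hτ : 0 ≤ τ.im) (ht : t ≠ 0) {m n : ℤ} (hm : m ≠ 0) (hn : n ≠ 0) :
    ‖thetaTerm N τ t m n‖ ≤ 2 * Real.exp (-(Real.pi * τ.im / N * (|(m : ℝ)| + |(n : ℝ)|))) := by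
  refine (norm_thetaTerm_le hτ ht _ _).trans ?_
  gcongr
  exact abs_add_abs_le_two_mul_abs_mul hm hn

lemma thetaTerm_zero_left (hτ : 0 < τ.im) (N : ℕ) (t x : ℝ) :
    thetaTerm N τ t 0 x = -(oddErfc (√(2 * Real.pi * τ.im) * (t / √(2 * N)) * x) : ℂ) := by
  rw [thetaTerm, phiTilde_of_sq_eq_sq hτ (by simp [iota, neg_div])]
  simp only [iota]
  ring_nf

lemma thetaTerm_zero_right (hτ : 0 < τ.im) (N : ℕ) (t x : ℝ) :
    thetaTerm N τ t x 0 = -(oddErfc (√(2 * Real.pi * τ.im) * (t⁻¹ / √(2 * N)) * x) : ℂ) := by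
  rw [thetaTerm, phiTilde_of_sq_eq_sq hτ (by simp [iota])]
  simp only [iota]
  ring_nf

lemma thetaTerm_zero_zero (hτ : 0 < τ.im) (N : ℕ) (t : ℝ) : thetaTerm N τ t 0 0 = 0 := by
  simp [thetaTerm_zero_left hτ, oddErfc]

lemma summable_and_norm_tsum_oddErfc_progression_le {a : ℝ} (ha : 0 < a) (hN : 0 < N) (k : ℤ) :
    Summable (fun n : ℤ => -(oddErfc (a * (k + N * n : ℤ)) : ℂ)) ∧
      ‖∑' n : ℤ, -(oddErfc (a * (k + N * n : ℤ)) : ℂ)‖ ≤ 1 := by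
  have haN : 0 < a * N := by positivity
  have hrescale (n : ℤ) : a * (k + N * n : ℤ) = a * N * ((k : ℝ) / N + n) := by
    push_cast
    field_simp
  simp only [hrescale]
  refine ⟨(Complex.summable_ofReal.mpr (summable_oddErfc haN _)).neg, ?_⟩
  rw [tsum_neg, norm_neg, ← Complex.ofReal_tsum, Complex.norm_real]
  exact abs_tsum_oddErfc_le haN _

lemma injective_progression (hN : 0 < N) (k : ℤ) : Function.Injective fun n : ℤ => k + N * n :=
  fun a b hab => by simpa [hN.ne'] using hab

lemma subsingleton_setOf_progression_eq_zero (hN : 0 < N) (k : ℤ) :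
    {n : ℤ | k + N * n = 0}.Subsingleton :=
  fun _ ha _ hb => injective_progression hN k (ha.trans hb.symm)

end Theta

/-- for fixed `τ` in the upper half-plane, `t ↦ Θ̃_h(τ,t)` is bounded
on `(0,∞)`. -/
theorem stmt18 (N : ℕ) (hN : 0 < N) (h : ℤ × ℤ) (τ : ℂ) (hτ : 0 < τ.im) :
    ∃ C : ℝ, ∀ t : ℝ, 0 < t → ‖ThetaTilde N h τ t‖ ≤ C := by
  set κ := Real.pi * τ.im / N
  have hκ : 0 < κ := by positivity
  let D (p : ℤ × ℤ) : ℝ :=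
    2 * Real.exp (-(κ * (|((h.1 + N * p.1 : ℤ) : ℝ)| + |((h.2 + N * p.2 : ℤ) : ℝ)|)))
  have hD : Summable D :=
    ((summable_int_prod_exp_neg_mul_abs_add_abs hκ).comp_injective
      ((injective_progression hN h.1).prodMap (injective_progression hN h.2))).mul_left 2
  refine ⟨‖(cH0 N h : ℂ)‖ + (∑' p, D p + 1 + 1), fun t ht => ?_⟩
  refine (norm_add_le _ _).trans (add_le_add_right ?_ _)
  refine norm_tsum_prod_le_tsum_add_add (f := fun p : ℤ × ℤ =>
      thetaTerm N τ t (h.1 + N * p.1 : ℤ) (h.2 + N * p.2 : ℤ))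
    (subsingleton_setOf_progression_eq_zero hN h.1)
    (subsingleton_setOf_progression_eq_zero hN h.2)
    zero_le_one zero_le_one hD (fun p => by positivity)
    (fun i hi j hj => norm_thetaTerm_int_le hτ.le ht.ne' hi hj)
    (fun i (hi : h.1 + N * i = 0) j (hj : h.2 + N * j = 0) => ?_)
    (fun i (hi : h.1 + N * i = 0) => ?_) (fun j (hj : h.2 + N * j = 0) => ?_)
  · simp only [hi, hj, Int.cast_zero, thetaTerm_zero_zero hτ]
  · simp only [hi, Int.cast_zero, thetaTerm_zero_left hτ]
    exact summable_and_norm_tsum_oddErfc_progression_le (by positivity) hN h.2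
  · simp only [hj, Int.cast_zero, thetaTerm_zero_right hτ]
    exact summable_and_norm_tsum_oddErfc_progression_le (by positivity) hN h.1

end
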